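/- arXiv:1511.08746 — 4 statements merged into one kernel-verified Lean document; each statement's English description precedes it below -/
import Mathlib

section
/- Let H be a real m×n matrix and let k ≥ 1 be a natural number. Then the following are equivalent: (i) for every measurement vector y ∈ ℝ^m there is at most one k-sparse vector s ∈ ℝ^n with y = H s (equivalently, whenever s₁ and s₂ are k-sparse and H s₁ = H s₂, then s₁ = s₂); (ii) spark(H) > 2k, i.e., every nonempty set of at most 2k columns of H is linearly independent. -/
/-- The ℓ0-"norm": number of nonzero entries of a vector. -/
noncomputable def l0 {n : ℕ} (s : Fin n → ℝ) : ℕ := (Finset.univ.filter (fun i => s i ≠ 0)).card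

/-- For a real m×n matrix `H` and `k ≥ 1`, uniqueness of `k`-sparse solutions of
`y = H s` for every `y` is equivalent to `spark(H) > 2k`, i.e. every nonempty set
of at most `2k` columns of `H` is linearly independent. -/
theorem sparse_uniqueness_iff_spark_gt_two_k
    {m n : ℕ} (H : Matrix (Fin m) (Fin n) ℝ) (k : ℕ) (hk : 1 ≤ k) :
    (∀ s₁ s₂ : Fin n → ℝ, l0 s₁ ≤ k → l0 s₂ ≤ k →
        H.mulVec s₁ = H.mulVec s₂ → s₁ = s₂) ↔
    (∀ T : Finset (Fin n), T.Nonempty → T.card ≤ 2 * k →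
        LinearIndependent ℝ (fun i : T => H.transpose (i : Fin n))) := by
  have key : ∀ T : Finset (Fin n), LinearIndependent ℝ (fun i : T => H.transpose (i : Fin n)) ↔
      ∀ g : Fin n → ℝ, ∑ i ∈ T, g i • H.transpose i = 0 → ∀ i ∈ T, g i = 0 := by
    intro T
    exact linearIndepOn_finset_iff (R := ℝ) (v := H.transpose) (s := T)
  have hmul : ∀ s : Fin n → ℝ, H.mulVec s = ∑ i, s i • H.transpose i := by
    intro s
    ext j
    simp [Matrix.mulVec, dotProduct, Finset.sum_apply, mul_comm]
  constructor
  · intro h T _ hT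
    rw [key]
    intro g hg i hi
    obtain ⟨U, hUT, hU⟩ := Finset.exists_subset_card_eq (s := T) (n := min k T.card)
      (min_le_right _ _)
    have h0 : ∀ (A : Finset (Fin n)) (f : Fin n → ℝ), A.card ≤ k →
        l0 (fun i => if i ∈ A then f i else 0) ≤ k := by
      intro A f hA
      refine le_trans (Finset.card_le_card ?_) hA
      intro x hx
      by_contra hxA
      simp [hxA] at hx
    have hsd : (T \ U).card ≤ k := by
      rw [Finset.card_sdiff_of_subset hUT]
      omega
    have e := h (fun i => if i ∈ U then g i else 0) (fun i => if i ∈ T \ U then - g i else 0)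
      (h0 U g (by omega)) (h0 (T \ U) (fun i => - g i) hsd) (by
        rw [hmul, hmul]
        simp only [ite_smul, zero_smul, Finset.sum_ite_mem, Finset.univ_inter, neg_smul,
          Finset.sum_neg_distrib]
        rw [eq_neg_iff_add_eq_zero, add_comm, Finset.sum_sdiff hUT]
        exact hg)
    have ei := congrFun e i
    by_cases hiU : i ∈ U
    · simpa [hiU] using ei
    · simpa [hiU, hi] using ei
  · intro h s₁ s₂ h1 h2 he
    by_contra hne
    let T : Finset (Fin n) := Finset.univ.filter (fun i => s₁ i - s₂ i ≠ 0)
    obtain ⟨j, hj⟩ := Function.ne_iff.mp hne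
    have hjT : j ∈ T := by simp [T, sub_eq_zero, hj]
    have hc : T.card ≤ 2 * k := by
      have hsub : T ⊆ (Finset.univ.filter (fun i => s₁ i ≠ 0)) ∪
          (Finset.univ.filter (fun i => s₂ i ≠ 0)) := by
        intro x hx
        by_contra hx'
        simp at hx'
        simp [T, hx'.1, hx'.2] at hx
      have a := Finset.card_le_card hsub
      have b := Finset.card_union_le (Finset.univ.filter (fun i => s₁ i ≠ 0))
        (Finset.univ.filter (fun i => s₂ i ≠ 0))
      unfold l0 at h1 h2
      omega
    have hz := (key T).1 (h T ⟨j, hjT⟩ hc) (fun i => s₁ i - s₂ i) (by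
      rw [Finset.sum_subset (Finset.subset_univ T)]
      · rw [hmul, hmul] at he
        simp only [sub_smul, Finset.sum_sub_distrib]
        rw [he, sub_self]
      · intro x _ hx
        have : s₁ x - s₂ x = 0 := by
          by_contra hh
          exact hx (by simpa [T] using hh)
        simp [this]) j hjT
    exact hj (sub_eq_zero.mp hz)
end

section
/- Let H be a real m×n matrix such that every set of at most m columns of H is linearly independent (i.e., spark(H) = m + 1). Then for every natural number k with 2k ≤ m and every y ∈ ℝ^m, there is at most one k-sparse vector s ∈ ℝ^n satisfying y = H s. -/
/-- If every set of at most `m` columns of `H` is linearly independent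
(i.e. `spark(H) = m + 1`), then for every `k` with `2k ≤ m` and every `y`
there is at most one `k`-sparse solution of `y = H s`. -/
theorem spark_full_sparse_uniqueness
    {m n : ℕ} (H : Matrix (Fin m) (Fin n) ℝ)
    (hspark : ∀ T : Finset (Fin n), T.card ≤ m →
      LinearIndependent ℝ (fun i : T => H.transpose (i : Fin n))) :
    ∀ k : ℕ, 2 * k ≤ m →
      ∀ s₁ s₂ : Fin n → ℝ, l0 s₁ ≤ k → l0 s₂ ≤ k →
        H.mulVec s₁ = H.mulVec s₂ → s₁ = s₂ := by
  intro k hk s₁ s₂ h1 h2 h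
  classical
  let T : Finset (Fin n) :=
    Finset.univ.filter (fun i => s₁ i ≠ 0) ∪ Finset.univ.filter (fun i => s₂ i ≠ 0)
  have hT : T.card ≤ m := by
    have := Finset.card_union_le (Finset.univ.filter (fun i => s₁ i ≠ 0))
      (Finset.univ.filter (fun i => s₂ i ≠ 0))
    unfold l0 at h1 h2
    change (_ ∪ _ : Finset (Fin n)).card ≤ m
    omega
  have hout : ∀ i, i ∉ T → s₁ i - s₂ i = 0 := by
    intro i hi
    simp only [T, Finset.mem_union, Finset.mem_filter, Finset.mem_univ, true_and, not_or,
      not_not] at hi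
    rw [hi.1, hi.2, sub_zero]
  have hli := Fintype.linearIndependent_iff.mp (hspark T hT) (fun i => s₁ i - s₂ i) (by
    ext j
    have hj := congrFun h j
    simp only [Matrix.mulVec, dotProduct] at hj
    simp only [Finset.sum_apply, Pi.smul_apply, smul_eq_mul, Matrix.transpose_apply,
      Pi.zero_apply]
    rw [Finset.sum_coe_sort T (fun i => (s₁ i - s₂ i) * H j i),
      Finset.sum_subset (Finset.subset_univ T) (fun i _ hi => by rw [hout i hi, zero_mul])]
    rw [← sub_eq_zero, ← Finset.sum_sub_distrib] at hj
    rw [← hj]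
    exact Finset.sum_congr rfl (fun i _ => by ring))
  funext i
  by_cases hi : i ∈ T
  · exact sub_eq_zero.mp (hli ⟨i, hi⟩)
  · exact sub_eq_zero.mp (hout i hi)
end

section
/- Let H be a real m×n matrix, k ≥ 1 a natural number, and δ a real number with 0 ≤ δ < √2 − 1. Suppose H satisfies the restricted isometry property of order 2k with constant δ, i.e., (1−δ)‖x‖₂² ≤ ‖H x‖₂² ≤ (1+δ)‖x‖₂² for every 2k-sparse x ∈ ℝ^n. Let s ∈ ℝ^n be k-sparse, set y = H s, and let s* be any minimizer of the ℓ1-norm ‖x‖₁ over the set {x ∈ ℝ^n : H x = y}. Then s* = s. -/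
open Matrix

lemma rip_aux_top {n : ℕ} (h : Fin n → ℝ) (S : Finset (Fin n)) (k : ℕ) (hk : k ≤ S.card) :
    ∃ T ⊆ S, T.card = k ∧ ∀ i ∈ T, ∀ j ∈ S \ T, |h j| ≤ |h i| := by
  induction k with
  | zero => exact ⟨∅, by simp, by simp, by simp⟩
  | succ k ih =>
    obtain ⟨T, hTS, hT, hc⟩ := ih (by omega)
    have hne : (S \ T).Nonempty := by
      rw [← Finset.card_pos, Finset.card_sdiff_of_subset hTS]; omega
    obtain ⟨a, ha, hmax⟩ := Finset.exists_max_image (S \ T) (fun i => |h i|) hne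
    have ha' := Finset.mem_sdiff.1 ha
    refine ⟨insert a T, Finset.insert_subset ha'.1 hTS, ?_, ?_⟩
    · rw [Finset.card_insert_of_notMem ha'.2, hT]
    · intro i hi j hj
      have hj' : j ∈ S \ T := by
        simp only [Finset.mem_sdiff, Finset.mem_insert, not_or] at hj ⊢
        exact ⟨hj.1, hj.2.2⟩
      rcases Finset.mem_insert.1 hi with rfl | hi
      · exact hmax j hj'
      · exact hc i hi j hj'

lemma rip_aux_top2 {n : ℕ} (h : Fin n → ℝ) (S : Finset (Fin n)) (k : ℕ) (hk : 1 ≤ k) :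
    ∃ T ⊆ S, T.card ≤ k ∧ (S.Nonempty → T.Nonempty) ∧ ∃ c : ℝ, 0 ≤ c ∧
      k * c ≤ ∑ i ∈ T, |h i| ∧ ∀ j ∈ S \ T, |h j| ≤ c := by
  by_cases hS : S.card ≤ k
  · refine ⟨S, subset_rfl, hS, id, 0, le_rfl, ?_, by simp⟩
    simpa using Finset.sum_nonneg (fun i _ => abs_nonneg (h i))
  · obtain ⟨T, hTS, hT, hc⟩ := rip_aux_top h S k (by omega)
    have hk0 : (0:ℝ) < k := by exact_mod_cast hk
    refine ⟨T, hTS, hT.le, fun _ => by rw [← Finset.card_pos]; omega,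
      (∑ i ∈ T, |h i|) / k, ?_, ?_, ?_⟩
    · exact div_nonneg (Finset.sum_nonneg (fun i _ => abs_nonneg (h i))) hk0.le
    · rw [mul_div_cancel₀ _ hk0.ne']
    · intro j hj
      rw [le_div_iff₀ hk0]
      have := Finset.card_nsmul_le_sum T (fun i => |h i|) (|h j|) (fun i hi => hc i hi j hj)
      rw [hT, nsmul_eq_mul] at this
      linarith

lemma rip_aux_blocks {n : ℕ} (h : Fin n → ℝ) (k : ℕ) (hk : 1 ≤ k) (f : Finset (Fin n) → ℝ)
    (C : ℝ) (hC : 0 ≤ C) (f0 : f ∅ = 0)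
    (fadd : ∀ S T, T ⊆ S → f S = f T + f (S \ T)) (N : ℕ) :
    ∀ S : Finset (Fin n), S.card ≤ N →
    (∀ T ⊆ S, T.card ≤ k → f T ≤ C * √(∑ i ∈ T, h i ^ 2)) →
    ∀ c : ℝ, 0 ≤ c → (∀ j ∈ S, |h j| ≤ c) →
    f S ≤ C * (√k * c + (∑ i ∈ S, |h i|) / √k) := by
  have hk0 : (0:ℝ) < k := by exact_mod_cast hk
  have hsk : 0 < √(k:ℝ) := Real.sqrt_pos.2 hk0
  have hss : √(k:ℝ) * √(k:ℝ) = k := Real.mul_self_sqrt hk0.le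
  induction N with
  | zero =>
    intro S hS _ c hc _
    have : S = ∅ := by simpa using hS
    subst this
    rw [f0]; simp; positivity
  | succ N ih =>
    intro S hS hf c hc hcS
    rcases S.eq_empty_or_nonempty with rfl | hne
    · rw [f0]; simp; positivity
    obtain ⟨T, hTS, hT, hTne, c', hc'0, hc'k, hc'⟩ := rip_aux_top2 h S k hk
    have hTpos := Finset.card_pos.2 (hTne hne)
    have hcard := Finset.card_sdiff_of_subset hTS
    have h1 := ih (S \ T) (by omega)
      (fun U hU => hf U (hU.trans Finset.sdiff_subset)) c' hc'0 hc'
    have h2 := hf T hTS hT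
    have h3 : √(∑ i ∈ T, h i ^ 2) ≤ √k * c := by
      rw [Real.sqrt_le_left (by positivity)]
      calc ∑ i ∈ T, h i ^ 2 ≤ ∑ i ∈ T, c ^ 2 := by
            apply Finset.sum_le_sum
            intro i hi
            rw [← sq_abs]
            have := hcS i (hTS hi)
            gcongr
        _ = T.card * c ^ 2 := by simp
        _ ≤ k * c ^ 2 := by gcongr
        _ = (√k * c) ^ 2 := by rw [mul_pow, sq √(k:ℝ), hss]
    have h4 : √k * c' ≤ (∑ i ∈ T, |h i|) / √k := by
      rw [le_div_iff₀ hsk]; nlinarith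
    have h5 : (∑ i ∈ S, |h i|) = (∑ i ∈ S \ T, |h i|) + ∑ i ∈ T, |h i| :=
      (Finset.sum_sdiff hTS).symm
    rw [fadd S T hTS, h5, add_div]
    have h6 := mul_le_mul_of_nonneg_left h3 hC
    have h7 := mul_le_mul_of_nonneg_left h4 hC
    linarith

lemma rip_aux_orth {m n : ℕ} (H : Matrix (Fin m) (Fin n) ℝ) (k : ℕ) (δ : ℝ) 
    (hRIP : ∀ x : Fin n → ℝ, l0 x ≤ 2 * k →
      (1 - δ) * (x ⬝ᵥ x) ≤ (H.mulVec x) ⬝ᵥ (H.mulVec x) ∧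
      (H.mulVec x) ⬝ᵥ (H.mulVec x) ≤ (1 + δ) * (x ⬝ᵥ x))
    (u v : Fin n → ℝ) (huv : u ⬝ᵥ v = 0) (hsp : ∀ p q : ℝ, l0 (p • u + q • v) ≤ 2 * k) :
    -((H *ᵥ u) ⬝ᵥ (H *ᵥ v)) ≤ δ * (√(u ⬝ᵥ u) * √(v ⬝ᵥ v)) := by
  have hnn : ∀ w : Fin n → ℝ, 0 ≤ w ⬝ᵥ w := fun w => by
    simpa using dotProduct_star_self_nonneg w
  have ha := Real.mul_self_sqrt (hnn u)
  have hb := Real.mul_self_sqrt (hnn v)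
  have ha0 := Real.sqrt_nonneg (u ⬝ᵥ u)
  have hb0 := Real.sqrt_nonneg (v ⬝ᵥ v)
  generalize √(u ⬝ᵥ u) = a at *
  generalize √(v ⬝ᵥ v) = b at *
  rcases ha0.eq_or_lt with h0 | hapos
  · have : u = 0 := by
      rw [← dotProduct_self_eq_zero, ← ha, ← h0]; simp
    subst this; simp [← h0]
  rcases hb0.eq_or_lt with h0 | hbpos
  · have : v = 0 := by
      rw [← dotProduct_self_eq_zero, ← hb, ← h0]; simp
    subst this; simp [← h0]
  have h1 := (hRIP _ (hsp b (-a))).2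
  have h2 := (hRIP _ (hsp b a)).1
  have huv' : v ⬝ᵥ u = 0 := by rw [dotProduct_comm]; exact huv
  have hc : (H *ᵥ v) ⬝ᵥ (H *ᵥ u) = (H *ᵥ u) ⬝ᵥ (H *ᵥ v) := dotProduct_comm _ _
  simp only [mulVec_add, mulVec_smul, add_dotProduct, dotProduct_add, smul_dotProduct,
    dotProduct_smul, smul_eq_mul, huv, huv', hc, ← ha, ← hb] at h1 h2
  have hab : 0 < a * b := mul_pos hapos hbpos
  generalize (H *ᵥ u) ⬝ᵥ (H *ᵥ v) = X at *
  have : (a * b) * (-X) ≤ (a * b) * (δ * (a * b)) := by nlinarith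
  exact le_of_mul_le_mul_left this hab

/-- restriction of a vector to a finset -/
def ripRes {n : ℕ} (h : Fin n → ℝ) (S : Finset (Fin n)) : Fin n → ℝ :=
  fun i => if i ∈ S then h i else 0

lemma ripRes_union {n : ℕ} (h : Fin n → ℝ) (S T : Finset (Fin n)) (hST : Disjoint S T) :
    ripRes h (S ∪ T) = ripRes h S + ripRes h T := by
  funext i
  have : i ∈ S → i ∉ T := fun hi => Finset.disjoint_left.1 hST hi
  simp only [ripRes, Pi.add_apply, Finset.mem_union]
  by_cases h1 : i ∈ S <;> by_cases h2 : i ∈ T <;> simp_all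

lemma ripRes_dot {n : ℕ} (h : Fin n → ℝ) (S : Finset (Fin n)) :
    ripRes h S ⬝ᵥ ripRes h S = ∑ i ∈ S, h i ^ 2 := by
  simp [dotProduct, ripRes, sq]

lemma ripRes_dot_disj {n : ℕ} (h : Fin n → ℝ) (S T : Finset (Fin n)) (hST : Disjoint S T) :
    ripRes h S ⬝ᵥ ripRes h T = 0 := by
  apply Finset.sum_eq_zero
  intro i _
  have : i ∈ S → i ∉ T := fun hi => Finset.disjoint_left.1 hST hi
  simp only [ripRes]
  by_cases h1 : i ∈ S <;> by_cases h2 : i ∈ T <;> simp_all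

lemma ripRes_l0 {n : ℕ} (h : Fin n → ℝ) (S T : Finset (Fin n)) (p q : ℝ) :
    l0 (p • ripRes h S + q • ripRes h T) ≤ S.card + T.card := by
  refine le_trans (Finset.card_le_card ?_) (Finset.card_union_le S T)
  intro i hi
  by_contra hc
  simp only [Finset.mem_union, not_or] at hc
  simp [ripRes, hc.1, hc.2] at hi

/-- If `H` satisfies the RIP of order `2k` with constant `δ < √2 − 1`, `s` is
`k`-sparse, and `s*` minimizes the ℓ1-norm over `{x : H x = H s}`, then `s* = s`. -/
theorem rip_l1_exact_recovery
    {m n : ℕ} (H : Matrix (Fin m) (Fin n) ℝ) (k : ℕ) (hk : 1 ≤ k)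
    (δ : ℝ) (hδ0 : 0 ≤ δ) (hδ : δ < Real.sqrt 2 - 1)
    (hRIP : ∀ x : Fin n → ℝ, l0 x ≤ 2 * k →
      (1 - δ) * (x ⬝ᵥ x) ≤ (H.mulVec x) ⬝ᵥ (H.mulVec x) ∧
      (H.mulVec x) ⬝ᵥ (H.mulVec x) ≤ (1 + δ) * (x ⬝ᵥ x))
    (s : Fin n → ℝ) (hs : l0 s ≤ k)
    (sStar : Fin n → ℝ) (hfeas : H.mulVec sStar = H.mulVec s)
    (hmin : ∀ x : Fin n → ℝ, H.mulVec x = H.mulVec s →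
      (∑ i, |sStar i|) ≤ ∑ i, |x i|) :
    sStar = s := by
  have hk0 : (0:ℝ) < k := by exact_mod_cast hk
  have hsk : 0 < √(k:ℝ) := Real.sqrt_pos.2 hk0
  have hss : √(k:ℝ) * √(k:ℝ) = k := Real.mul_self_sqrt hk0.le
  obtain ⟨h, hh⟩ : ∃ h, h = sStar - s := ⟨_, rfl⟩
  have hHh : H *ᵥ h = 0 := by rw [hh, mulVec_sub, hfeas, sub_self]
  obtain ⟨A, hA⟩ : ∃ A, A = Finset.univ.filter (fun i => s i ≠ 0) := ⟨_, rfl⟩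
  have hAk : A.card ≤ k := by rw [hA]; exact hs
  -- cone condition
  have hcone : ∑ i ∈ Aᶜ, |h i| ≤ ∑ i ∈ A, |h i| := by
    have h1 := hmin s rfl
    rw [← Finset.sum_add_sum_compl A, ← Finset.sum_add_sum_compl A (fun i => |s i|)] at h1
    have h2 : ∑ i ∈ Aᶜ, |s i| = 0 := Finset.sum_eq_zero (by
      intro i hi
      simpa [hA] using hi)
    have h3 : ∑ i ∈ Aᶜ, |sStar i| = ∑ i ∈ Aᶜ, |h i| := Finset.sum_congr rfl (by
      intro i hi
      have : s i = 0 := by simpa [hA] using hi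
      simp [hh, this])
    have h4 : ∑ i ∈ A, |s i| ≤ ∑ i ∈ A, |sStar i| + ∑ i ∈ A, |h i| := by
      rw [← Finset.sum_add_distrib]
      apply Finset.sum_le_sum
      intro i _
      have := abs_sub_abs_le_abs_sub (s i) (sStar i)
      rw [abs_sub_comm] at this
      simp only [hh, Pi.sub_apply]
      linarith
    linarith
  obtain ⟨B, hBS, hBk, -, c, hc0, hck, hc⟩ := rip_aux_top2 h Aᶜ k hk
  have hAB : Disjoint A B := by
    rw [Finset.disjoint_left]; intro i hi hiB
    exact (Finset.mem_compl.1 (hBS hiB)) hi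
  set R := Aᶜ \ B with hR
  have hAR : Disjoint A R := by
    rw [Finset.disjoint_left]; intro i hi hiB
    simp [hR, hi] at hiB
  have hBR : Disjoint B R := Finset.disjoint_sdiff
  have hABR : Disjoint (A ∪ B) R := Finset.disjoint_union_left.2 ⟨hAR, hBR⟩
  obtain ⟨f, hf⟩ : ∃ f : Finset (Fin n) → ℝ,
    f = fun S => -((H *ᵥ ripRes h (A ∪ B)) ⬝ᵥ (H *ᵥ ripRes h S)) := ⟨_, rfl⟩
  set a := √(∑ i ∈ A, h i ^ 2) with ha
  set b := √(∑ i ∈ B, h i ^ 2) with hb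
  have ha0 : 0 ≤ a := Real.sqrt_nonneg _
  have hb0 : 0 ≤ b := Real.sqrt_nonneg _
  have ha2 : a * a = ∑ i ∈ A, h i ^ 2 :=
    Real.mul_self_sqrt (Finset.sum_nonneg fun i _ => sq_nonneg _)
  have hb2 : b * b = ∑ i ∈ B, h i ^ 2 :=
    Real.mul_self_sqrt (Finset.sum_nonneg fun i _ => sq_nonneg _)
  have horth : ∀ S T : Finset (Fin n), Disjoint S T → S.card ≤ k → T.card ≤ k →
      -((H *ᵥ ripRes h S) ⬝ᵥ (H *ᵥ ripRes h T)) ≤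
        δ * (√(∑ i ∈ S, h i ^ 2) * √(∑ i ∈ T, h i ^ 2)) := by
    intro S T hST hS hT
    have := rip_aux_orth H k δ hRIP (ripRes h S) (ripRes h T) (ripRes_dot_disj h S T hST)
      (fun p q => (ripRes_l0 h S T p q).trans (by omega))
    rwa [ripRes_dot, ripRes_dot] at this
  have hblk := rip_aux_blocks h k hk f (δ * (a + b)) (by positivity)
    (by
      have : ripRes h ∅ = 0 := by funext i; simp [ripRes]
      simp [hf, this])
    (by
      intro S T hTS
      have : ripRes h S = ripRes h T + ripRes h (S \ T) := by
        rw [← ripRes_union _ _ _ Finset.disjoint_sdiff, Finset.union_sdiff_of_subset hTS]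
      simp only [hf]
      rw [this, mulVec_add, dotProduct_add]; ring)
    R.card R le_rfl
    (by
      intro T hT hTk
      have h1 := horth A T (hAR.mono_right hT) hAk hTk
      have h2 := horth B T (hBR.mono_right hT) hBk hTk
      simp only [hf]
      rw [ripRes_union _ _ _ hAB, mulVec_add, add_dotProduct]
      rw [← ha] at h1
      rw [← hb] at h2
      linarith)
    c hc0 hc
  -- bound of the l1 tail
  have htail : √k * c + (∑ i ∈ R, |h i|) / √k ≤ a := by
    have h1 : √k * c ≤ (∑ i ∈ B, |h i|) / √k := by
      rw [le_div_iff₀ hsk]; nlinarith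
    have h2 : (∑ i ∈ R, |h i|) + ∑ i ∈ B, |h i| = ∑ i ∈ Aᶜ, |h i| := Finset.sum_sdiff hBS
    have h3 : ∑ i ∈ A, |h i| ≤ √k * a := by
      have h4 := sq_sum_le_card_mul_sum_sq (s := A) (f := fun i => |h i|)
      simp only [sq_abs] at h4
      rw [← ha2] at h4
      have h5 : (A.card : ℝ) ≤ k := by exact_mod_cast hAk
      apply le_of_sq_le_sq _ (by positivity)
      calc _ ≤ _ := h4
        _ ≤ k * (a * a) := by gcongr
        _ = _ := by rw [mul_pow, sq √(k:ℝ), hss]; ring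
    have h6 : (∑ i ∈ R, |h i|) / √k + (∑ i ∈ B, |h i|) / √k ≤ a := by
      rw [← add_div, h2, div_le_iff₀ hsk]; linarith
    linarith
  have hfR : f R = (H *ᵥ ripRes h (A ∪ B)) ⬝ᵥ (H *ᵥ ripRes h (A ∪ B)) := by
    have h1 : h = ripRes h (A ∪ B) + ripRes h R := by
      rw [← ripRes_union _ _ _ hABR]
      funext i
      by_cases hiA : i ∈ A <;> by_cases hiB : i ∈ B <;> simp [ripRes, hR, hiA, hiB]
    have h2 : H *ᵥ ripRes h R = - (H *ᵥ ripRes h (A ∪ B)) := by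
      rw [eq_neg_iff_add_eq_zero, ← mulVec_add, add_comm, ← h1, hHh]
    simp only [hf]
    rw [h2]; simp
  have hlow := (hRIP (ripRes h (A ∪ B)) (by
    have := ripRes_l0 h A B 1 1
    rw [one_smul, one_smul, ← ripRes_union _ _ _ hAB] at this
    omega)).1
  rw [ripRes_dot, Finset.sum_union hAB, ← ha2, ← hb2, ← hfR] at hlow
  have hmain : (1 - δ) * (a * a + b * b) ≤ δ * (a + b) * a :=
    hlow.trans (hblk.trans (mul_le_mul_of_nonneg_left htail (by positivity)))
  have ha00 : a = 0 := by
    have hs2 : √2 * √2 = (2:ℝ) := Real.mul_self_sqrt (by norm_num)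
    have hs0 : 0 < √(2:ℝ) := Real.sqrt_pos.2 (by norm_num)
    -- (a+b) a ≤ √2 (a²+b²)
    have h1 : (a + b) * a ≤ √2 * (a * a + b * b) := by
      have h2 : a + b ≤ √2 * √(a * a + b * b) := by
        rw [← Real.sqrt_mul (by norm_num)]
        apply Real.le_sqrt_of_sq_le
        nlinarith [sq_nonneg (a - b)]
      have h3 : a ≤ √(a * a + b * b) := Real.le_sqrt_of_sq_le (by nlinarith)
      have h4 := Real.mul_self_sqrt (show 0 ≤ a * a + b * b by positivity)
      calc _ ≤ (√2 * √(a * a + b * b)) * √(a * a + b * b) := by gcongr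
        _ = _ := by rw [mul_assoc, h4]
    have h5 : δ * (a + b) * a ≤ δ * (√2 * (a * a + b * b)) := by
      rw [mul_assoc]; gcongr
    have h6 : 0 < 1 - δ - δ * √2 := by nlinarith
    by_contra hne
    have : 0 < a * a + b * b := by positivity
    nlinarith
  have hA0 : ∑ i ∈ A, |h i| = 0 := by
    rw [ha00] at ha2
    apply Finset.sum_eq_zero
    intro i hi
    have := (Finset.sum_eq_zero_iff_of_nonneg (fun i _ => sq_nonneg (h i))).1
      (show ∑ i ∈ A, h i ^ 2 = 0 by rw [← ha2]; simp) i hi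
    simpa using this
  have hall : ∑ i, |h i| = 0 := by
    apply le_antisymm _ (Finset.sum_nonneg fun i _ => abs_nonneg _)
    rw [← Finset.sum_add_sum_compl A]; linarith
  have hz := (Finset.sum_eq_zero_iff_of_nonneg (fun i _ => abs_nonneg (h i))).1 hall
  funext i
  have := hz i (Finset.mem_univ i)
  rw [abs_eq_zero, hh, Pi.sub_apply] at this
  linarith
end

section
/- For every real δ with 0 ≤ δ < √2 − 1 there exists a constant C₀ > 0, depending only on δ, with the following property: for all natural numbers m, n, k with k ≥ 1, every real m×n matrix H satisfying the restricted isometry property of order 2k with constant δ, every s ∈ ℝ^n with y = H s, and every minimizer s* of the ℓ1-norm ‖x‖₁ over {x ∈ ℝ^n : H x = y}, one has ‖s* − s‖₁ ≤ C₀ ‖s − s_k‖₁, where s_k is the vector s with all but its k largest-magnitude entries set to zero. In particular, if s is k-sparse then s* = s. -/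
open Matrix

/-- The ℓ1-norm of a vector. -/
def l1 {n : ℕ} (s : Fin n → ℝ) : ℝ := ∑ i, |s i|

/-- Restriction of a vector to a set. -/
def rst {n : ℕ} (h : Fin n → ℝ) (S : Finset (Fin n)) : Fin n → ℝ := fun i => if i ∈ S then h i else 0

lemma rst_union {n : ℕ} (h : Fin n → ℝ) (S T : Finset (Fin n)) (hd : Disjoint S T) :
    rst h (S ∪ T) = rst h S + rst h T := by
  funext i
  have : i ∈ S → i ∉ T := fun hi => Finset.disjoint_left.mp hd hi
  simp only [rst, Pi.add_apply, Finset.mem_union]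
  by_cases h1 : i ∈ S <;> by_cases h2 : i ∈ T <;> simp_all

lemma rst_dot {n : ℕ} (h : Fin n → ℝ) (S : Finset (Fin n)) :
    rst h S ⬝ᵥ rst h S = ∑ i ∈ S, h i ^ 2 := by
  simp [rst, dotProduct, pow_two]

lemma rst_dot_disj {n : ℕ} (h : Fin n → ℝ) (S T : Finset (Fin n)) (hd : Disjoint S T) :
    rst h S ⬝ᵥ rst h T = 0 := by
  unfold dotProduct
  apply Finset.sum_eq_zero
  intro i _
  have : i ∈ S → i ∉ T := fun hi => Finset.disjoint_left.mp hd hi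
  simp only [rst]
  by_cases h1 : i ∈ S <;> by_cases h2 : i ∈ T <;> simp_all

lemma l0_comb {n : ℕ} (h : Fin n → ℝ) (S T : Finset (Fin n)) (a b : ℝ) :
    l0 (a • rst h S + b • rst h T) ≤ S.card + T.card := by
  refine le_trans (Finset.card_le_card ?_) (Finset.card_union_le S T)
  intro i hi
  simp only [Finset.mem_filter, Finset.mem_univ, true_and] at hi
  by_contra hc
  rw [Finset.mem_union, not_or] at hc
  apply hi
  simp [rst, hc.1, hc.2]

lemma select {n : ℕ} (h : Fin n → ℝ) (S : Finset (Fin n)) (k : ℕ) (hk : k ≤ S.card) :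
    ∃ B ⊆ S, B.card = k ∧ ∃ M : ℝ, 0 ≤ M ∧ (∀ i ∈ B, M ≤ |h i|) ∧ ∀ i ∈ S \ B, |h i| ≤ M := by
  induction k with
  | zero =>
    refine ⟨∅, by simp, by simp, ∑ i ∈ S, |h i|, Finset.sum_nonneg fun _ _ => abs_nonneg _, by simp, ?_⟩
    intro i hi
    exact Finset.single_le_sum (f := fun i => |h i|) (fun _ _ => abs_nonneg _) (by simpa using hi)
  | succ k ih =>
    obtain ⟨B, hBS, hc, M, hM0, hM, hM2⟩ := ih (by omega)
    have hne : (S \ B).Nonempty := by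
      rw [← Finset.card_pos, Finset.card_sdiff_of_subset hBS]; omega
    obtain ⟨a, ha, hmax⟩ := Finset.exists_max_image (S \ B) (fun i => |h i|) hne
    have ha' := Finset.mem_sdiff.mp ha
    refine ⟨insert a B, Finset.insert_subset ha'.1 hBS, by rw [Finset.card_insert_of_notMem ha'.2, hc],
      |h a|, abs_nonneg _, ?_, ?_⟩
    · intro i hi
      rcases Finset.mem_insert.mp hi with rfl | hi
      · exact le_rfl
      · exact (hM2 a ha).trans (hM i hi)
    · intro i hi
      apply hmax
      simp only [Finset.mem_sdiff, Finset.mem_insert, not_or] at hi ⊢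
      exact ⟨hi.1, hi.2.2⟩

lemma sqrt_le_of_bdd {n : ℕ} (h : Fin n → ℝ) (B : Finset (Fin n)) (k : ℕ) (M : ℝ) (hM : 0 ≤ M)
    (hc : B.card ≤ k) (hb : ∀ i ∈ B, |h i| ≤ M) :
    √(∑ i ∈ B, h i ^ 2) ≤ √k * M := by
  rw [Real.sqrt_le_left (by positivity), mul_pow, Real.sq_sqrt (by positivity)]
  calc ∑ i ∈ B, h i ^ 2 ≤ ∑ i ∈ B, M ^ 2 := Finset.sum_le_sum fun i hi => by
        rw [← sq_abs]; exact pow_le_pow_left₀ (abs_nonneg _) (hb i hi) 2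
    _ = B.card * M ^ 2 := by simp
    _ ≤ k * M ^ 2 := by gcongr

lemma blk {n : ℕ} (h : Fin n → ℝ) (k : ℕ) (hk : 1 ≤ k) (c : ℝ) (hc : 0 ≤ c)
    (φ : Finset (Fin n) → ℝ) (U : Finset (Fin n))
    (hadd : ∀ S T, Disjoint S T → φ (S ∪ T) = φ S + φ T)
    (hφ : ∀ B ⊆ U, B.card ≤ k → |φ B| ≤ c * √(∑ i ∈ B, h i ^ 2)) (N : ℕ) :
    ∀ S ⊆ U, S.card ≤ N → ∀ M : ℝ, 0 ≤ M → (∀ i ∈ S, |h i| ≤ M) →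
      √k * |φ S| ≤ c * (k * M + ∑ i ∈ S, |h i|) := by
  have hkk : √(k:ℝ) * √k = k := Real.mul_self_sqrt (by positivity)
  have base : ∀ S ⊆ U, S.card ≤ k → ∀ M : ℝ, 0 ≤ M → (∀ i ∈ S, |h i| ≤ M) →
      √k * |φ S| ≤ c * (k * M) := by
    intro S hSU hS M hM hb
    calc √k * |φ S| ≤ √k * (c * (√k * M)) := by
          gcongr
          exact (hφ S hSU hS).trans (by gcongr; exact sqrt_le_of_bdd h S k M hM hS hb)
      _ = c * (√k * √k * M) := by ring
      _ = _ := by rw [hkk]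
  induction N with
  | zero =>
    intro S hSU hS M hM hb
    refine (base S hSU (by omega) M hM hb).trans ?_
    gcongr
    exact le_add_of_nonneg_right (Finset.sum_nonneg fun _ _ => abs_nonneg _)
  | succ N ih =>
    intro S hSU hS M hM hb
    by_cases hSk : S.card ≤ k
    · refine (base S hSU hSk M hM hb).trans ?_
      gcongr
      exact le_add_of_nonneg_right (Finset.sum_nonneg fun _ _ => abs_nonneg _)
    · obtain ⟨B, hBS, hcB, M', hM0, hM1, hM2⟩ := select h S k (by omega)
      have h1 := base B (hBS.trans hSU) hcB.le M hM (fun i hi => hb i (hBS hi))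
      have h2 := ih (S \ B) (Finset.sdiff_subset.trans hSU)
        (by rw [Finset.card_sdiff_of_subset hBS]; omega) M' hM0 hM2
      have h3 : φ S = φ B + φ (S \ B) := by
        rw [← hadd _ _ Finset.disjoint_sdiff, Finset.union_sdiff_of_subset hBS]
      have h4 : k * M' ≤ ∑ i ∈ B, |h i| := by
        rw [← hcB, ← nsmul_eq_mul]; exact Finset.card_nsmul_le_sum B _ _ hM1
      have h5 := Finset.sum_sdiff (f := fun i => |h i|) hBS
      calc √k * |φ S| ≤ √k * (|φ B| + |φ (S \ B)|) := by
            rw [h3]; gcongr; exact abs_add_le _ _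
        _ = √k * |φ B| + √k * |φ (S \ B)| := by ring
        _ ≤ c * (k * M) + c * (∑ i ∈ B, |h i| + ∑ i ∈ S \ B, |h i|) :=
            add_le_add h1 (h2.trans (by gcongr))
        _ = _ := by rw [← h5]; ring

lemma rip_inner {m n k : ℕ} (δ : ℝ) (H : Matrix (Fin m) (Fin n) ℝ)
    (hR : ∀ x : Fin n → ℝ, l0 x ≤ 2 * k →
            (1 - δ) * (x ⬝ᵥ x) ≤ (H.mulVec x) ⬝ᵥ (H.mulVec x) ∧
            (H.mulVec x) ⬝ᵥ (H.mulVec x) ≤ (1 + δ) * (x ⬝ᵥ x))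
    (h : Fin n → ℝ) (S T : Finset (Fin n)) (hd : Disjoint S T) (hS : S.card ≤ k) (hT : T.card ≤ k) :
    |(H.mulVec (rst h S)) ⬝ᵥ (H.mulVec (rst h T))| ≤
      δ * √(∑ i ∈ S, h i ^ 2) * √(∑ i ∈ T, h i ^ 2) := by
  have key : ∀ a b : ℝ, 2 * (a * b) * ((H.mulVec (rst h S)) ⬝ᵥ (H.mulVec (rst h T))) ≤
      δ * (a ^ 2 * ∑ i ∈ S, h i ^ 2 + b ^ 2 * ∑ i ∈ T, h i ^ 2) := by
    intro a b
    have h1 := (hR (a • rst h S + b • rst h T) ((l0_comb h S T a b).trans (by omega))).2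
    have h2 := (hR (a • rst h S + (-b) • rst h T) ((l0_comb h S T a (-b)).trans (by omega))).1
    have c1 := dotProduct_comm (H.mulVec (rst h T)) (H.mulVec (rst h S))
    have c2 := rst_dot_disj h S T hd
    have c3 := rst_dot_disj h T S hd.symm
    simp only [mulVec_add, mulVec_smul, add_dotProduct, dotProduct_add, smul_dotProduct,
      dotProduct_smul, smul_eq_mul, rst_dot, c1, c2, c3] at h1 h2
    linarith
  have p0 : 0 ≤ ∑ i ∈ S, h i ^ 2 := Finset.sum_nonneg fun _ _ => sq_nonneg _
  have q0 : 0 ≤ ∑ i ∈ T, h i ^ 2 := Finset.sum_nonneg fun _ _ => sq_nonneg _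
  have zero : ∀ S : Finset (Fin n), √(∑ i ∈ S, h i ^ 2) = 0 → rst h S = 0 := by
    intro S hS
    rw [Real.sqrt_eq_zero (Finset.sum_nonneg fun _ _ => sq_nonneg _), ← rst_dot,
      dotProduct_self_eq_zero] at hS
    exact hS
  have sp := Real.sq_sqrt p0
  have sq := Real.sq_sqrt q0
  set p := √(∑ i ∈ S, h i ^ 2) with hp
  set q := √(∑ i ∈ T, h i ^ 2) with hq
  have hpn : 0 ≤ p := Real.sqrt_nonneg _
  rcases hpn.eq_or_lt with hp0 | hp0
  · rw [zero S hp0.symm, ← hp0]; simp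
  have hqn : 0 ≤ q := Real.sqrt_nonneg _
  rcases hqn.eq_or_lt with hq0 | hq0
  · rw [zero T hq0.symm, ← hq0]; simp
  have k1 := key q p
  have k2 := key q (-p)
  rw [← sp, ← sq] at k1 k2
  have pq : 0 < p * q := mul_pos hp0 hq0
  rw [abs_le]
  constructor
  · refine le_of_mul_le_mul_left ?_ pq
    nlinarith
  · refine le_of_mul_le_mul_left ?_ pq
    nlinarith

lemma nsp {m n k : ℕ} (hk : 1 ≤ k) (δ : ℝ) (hδ0 : 0 ≤ δ) (hδ1 : δ < 1) (H : Matrix (Fin m) (Fin n) ℝ)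
    (hR : ∀ x : Fin n → ℝ, l0 x ≤ 2 * k →
            (1 - δ) * (x ⬝ᵥ x) ≤ (H.mulVec x) ⬝ᵥ (H.mulVec x) ∧
            (H.mulVec x) ⬝ᵥ (H.mulVec x) ≤ (1 + δ) * (x ⬝ᵥ x))
    (h : Fin n → ℝ) (hH : H.mulVec h = 0) (T : Finset (Fin n)) (hT : T.card ≤ k) :
    (1 - δ) * ∑ i ∈ T, |h i| ≤ √2 * δ * ∑ i ∈ Tᶜ, |h i| := by
  obtain ⟨B, hBT, hcB, M, hM0, hM1, hM2⟩ : ∃ B ⊆ Tᶜ, B.card ≤ k ∧ ∃ M : ℝ, 0 ≤ M ∧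
      k * M ≤ ∑ i ∈ B, |h i| ∧ ∀ i ∈ Tᶜ \ B, |h i| ≤ M := by
    by_cases hc : k ≤ Tᶜ.card
    · obtain ⟨B, hBS, hcB, M', hM0, hM1, hM2⟩ := select h Tᶜ k hc
      refine ⟨B, hBS, hcB.le, M', hM0, ?_, hM2⟩
      rw [← hcB, ← nsmul_eq_mul]; exact Finset.card_nsmul_le_sum B _ _ hM1
    · exact ⟨Tᶜ, subset_rfl, by omega, 0, le_rfl,
        by simpa using Finset.sum_nonneg fun _ _ => abs_nonneg _, by simp⟩
  have hTB : Disjoint T B := Finset.disjoint_left.mpr fun i h1 h2 => by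
    simpa [h1] using hBT h2
  set P := √(∑ i ∈ T, h i ^ 2) with hP
  set Q := √(∑ i ∈ B, h i ^ 2) with hQ
  set R := √(∑ i ∈ T ∪ B, h i ^ 2) with hRR
  have hP0 : 0 ≤ P := Real.sqrt_nonneg _
  have hQ0 : 0 ≤ Q := Real.sqrt_nonneg _
  have hR0 : 0 ≤ R := Real.sqrt_nonneg _
  have nn : ∀ S : Finset (Fin n), 0 ≤ ∑ i ∈ S, h i ^ 2 :=
    fun S => Finset.sum_nonneg fun _ _ => sq_nonneg _
  have hPs : P ^ 2 = ∑ i ∈ T, h i ^ 2 := Real.sq_sqrt (nn _)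
  have hQs : Q ^ 2 = ∑ i ∈ B, h i ^ 2 := Real.sq_sqrt (nn _)
  have hRs : R ^ 2 = ∑ i ∈ T ∪ B, h i ^ 2 := Real.sq_sqrt (nn _)
  have hPQR : R ^ 2 = P ^ 2 + Q ^ 2 := by rw [hPs, hQs, hRs, Finset.sum_union hTB]
  have hPR : P ≤ R := abs_le_of_sq_le_sq' (by nlinarith) hR0 |>.2
  have h2 : √(2:ℝ) ^ 2 = 2 := Real.sq_sqrt (by norm_num)
  have hPQ : P + Q ≤ √2 * R := by
    refine abs_le_of_sq_le_sq' ?_ (by positivity) |>.2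
    rw [mul_pow, h2]; nlinarith [sq_nonneg (P - Q)]
  set φ : Finset (Fin n) → ℝ := fun S => (H.mulVec (rst h (T ∪ B))) ⬝ᵥ (H.mulVec (rst h S)) with hφ
  have hb := blk h k hk (δ * (P + Q)) (by positivity) φ (Tᶜ \ B)
    (by intro S S' hd; simp only [hφ]; rw [rst_union h S S' hd, mulVec_add, dotProduct_add])
    (by
      intro S hS hSk
      have d1 : Disjoint T S := Finset.disjoint_left.mpr fun i h1 h2 => by
        simpa [h1] using hS h2
      have d2 : Disjoint B S := Finset.disjoint_left.mpr fun i h1 h2 => by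
        simpa [h1] using hS h2
      have e1 := rip_inner δ H hR h T S d1 hT hSk
      have e2 := rip_inner δ H hR h B S d2 hcB hSk
      simp only [hφ]
      rw [rst_union h T B hTB, mulVec_add, add_dotProduct]
      refine (abs_add_le _ _).trans ((add_le_add e1 e2).trans (le_of_eq ?_))
      ring) _ (Tᶜ \ B) subset_rfl le_rfl M hM0 hM2
  have hsum : k * M + ∑ i ∈ Tᶜ \ B, |h i| ≤ ∑ i ∈ Tᶜ, |h i| := by
    have := Finset.sum_sdiff (f := fun i => |h i|) hBT
    linarith
  set L := ∑ i ∈ Tᶜ, |h i| with hL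
  have hL0 : 0 ≤ L := Finset.sum_nonneg fun _ _ => abs_nonneg _
  have hdec : rst h (T ∪ B) + rst h (Tᶜ \ B) = h := by
    rw [← rst_union]
    · funext i
      simp only [rst, Finset.mem_union, Finset.mem_sdiff, Finset.mem_compl]
      rw [if_pos]; tauto
    · exact Finset.disjoint_left.mpr fun i h1 h2 => by
        simp only [Finset.mem_union, Finset.mem_sdiff, Finset.mem_compl] at h1 h2; tauto
  have hneg : H.mulVec (rst h (Tᶜ \ B)) = - H.mulVec (rst h (T ∪ B)) := by
    rw [← hdec, mulVec_add] at hH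
    exact (neg_eq_of_add_eq_zero_right hH).symm
  have hlow := (hR (rst h (T ∪ B)) (by
    have := l0_comb h T B 1 1
    rw [one_smul, one_smul, ← rst_union h T B hTB] at this
    omega)).1
  rw [rst_dot, ← hRs] at hlow
  have hlow2 : (1 - δ) * R ^ 2 ≤ |φ (Tᶜ \ B)| := by
    simp only [hφ]
    rw [hneg, dotProduct_neg, abs_neg]
    exact hlow.trans (le_abs_self _)
  have hfin : √k * ((1 - δ) * R ^ 2) ≤ δ * (√2 * R) * L := by
    calc _ ≤ √k * |φ (Tᶜ \ B)| := by gcongr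
      _ ≤ _ := hb
      _ ≤ _ := by gcongr
  have hA : ∑ i ∈ T, |h i| ≤ √k * P := by
    refine abs_le_of_sq_le_sq' ?_ (by positivity) |>.2
    rw [mul_pow, hPs, Real.sq_sqrt (by positivity)]
    have := sq_sum_le_card_mul_sum_sq (s := T) (f := fun i => |h i|)
    simp only [sq_abs] at this
    refine this.trans ?_
    have := nn T
    gcongr
  have hA2 : (1 - δ) * ∑ i ∈ T, |h i| ≤ (1 - δ) * (√k * R) := by
    have : 0 ≤ 1 - δ := by linarith
    gcongr
    exact hA.trans (by gcongr)
  refine hA2.trans ?_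
  rcases hR0.eq_or_lt with h0 | h0
  · rw [← h0]; simp; positivity
  · refine le_of_mul_le_mul_left ?_ h0
    nlinarith

/-- For every `δ < √2 − 1` there is a constant `C₀ > 0` depending only on `δ` such
that for every matrix `H` satisfying the RIP of order `2k` with constant `δ`,
every `s`, and every ℓ1-minimizer `s*` over `{x : H x = H s}`, one has
`‖s* − s‖₁ ≤ C₀ ‖s − s_k‖₁` where `s_k` is a best `k`-term approximation of `s`;
in particular, if `s` is `k`-sparse, then `s* = s`. -/
theorem rip_l1_stable_recovery
    (δ : ℝ) (hδ0 : 0 ≤ δ) (hδ : δ < Real.sqrt 2 - 1) :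
    ∃ C₀ : ℝ, 0 < C₀ ∧
      ∀ (m n k : ℕ), 1 ≤ k →
        ∀ H : Matrix (Fin m) (Fin n) ℝ,
          (∀ x : Fin n → ℝ, l0 x ≤ 2 * k →
            (1 - δ) * (x ⬝ᵥ x) ≤ (H.mulVec x) ⬝ᵥ (H.mulVec x) ∧
            (H.mulVec x) ⬝ᵥ (H.mulVec x) ≤ (1 + δ) * (x ⬝ᵥ x)) →
          ∀ s sStar sk : Fin n → ℝ,
            H.mulVec sStar = H.mulVec s →
            (∀ x : Fin n → ℝ, H.mulVec x = H.mulVec s → l1 sStar ≤ l1 x) →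
            (l0 sk ≤ k ∧ ∀ x : Fin n → ℝ, l0 x ≤ k → l1 (s - sk) ≤ l1 (s - x)) →
            l1 (sStar - s) ≤ C₀ * l1 (s - sk) ∧ (l0 s ≤ k → sStar = s) := by
  have h2 : √(2:ℝ) * √2 = 2 := Real.mul_self_sqrt (by norm_num)
  have h20 : 0 ≤ √(2:ℝ) := Real.sqrt_nonneg _
  have hlt : 0 < 1 - δ - √2 * δ := by nlinarith
  have hδ1 : δ < 1 := by nlinarith
  refine ⟨4 * (1 - δ) / (1 - δ - √2 * δ), div_pos (by linarith) hlt, ?_⟩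
  intro m n k hk H hR s sStar sk hH hmin ⟨hsk, hbest⟩
  have main : l1 (sStar - s) ≤ 4 * (1 - δ) / (1 - δ - √2 * δ) * l1 (s - sk) := by
    set T : Finset (Fin n) := Finset.univ.filter (fun i => sk i ≠ 0) with hT
    have h1 := nsp hk δ hδ0 hδ1 H hR (sStar - s) (by rw [mulVec_sub, hH, sub_self]) T hsk
    have hm := hmin s rfl
    have hσ : ∑ i ∈ Tᶜ, |s i| ≤ l1 (s - sk) := by
      calc ∑ i ∈ Tᶜ, |s i| = ∑ i ∈ Tᶜ, |(s - sk) i| := Finset.sum_congr rfl fun i hi => by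
            have : sk i = 0 := by simpa [hT] using hi
            simp [this]
        _ ≤ l1 (s - sk) := Finset.sum_le_sum_of_subset_of_nonneg (Finset.subset_univ _)
            fun _ _ _ => abs_nonneg _
    have a1 : ∑ i ∈ T, |s i| ≤ ∑ i ∈ T, |sStar i| + ∑ i ∈ T, |(sStar - s) i| := by
      rw [← Finset.sum_add_distrib]
      refine Finset.sum_le_sum fun i _ => ?_
      have := abs_sub_abs_le_abs_sub (s i) (sStar i)
      rw [abs_sub_comm] at this
      simp only [Pi.sub_apply]; linarith
    have a2 : ∑ i ∈ Tᶜ, |(sStar - s) i| ≤ ∑ i ∈ Tᶜ, |sStar i| + ∑ i ∈ Tᶜ, |s i| := by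
      rw [← Finset.sum_add_distrib]
      exact Finset.sum_le_sum fun i _ => abs_sub _ _
    have b1 := Finset.sum_add_sum_compl T (fun i => |s i|)
    have b2 := Finset.sum_add_sum_compl T (fun i => |sStar i|)
    have b3 := Finset.sum_add_sum_compl T (fun i => |(sStar - s) i|)
    have hL0 : 0 ≤ ∑ i ∈ Tᶜ, |(sStar - s) i| := Finset.sum_nonneg fun _ _ => abs_nonneg _
    have hm' : ∑ i, |sStar i| ≤ ∑ i, |s i| := hm
    change ∑ i, |(sStar - s) i| ≤ _
    rw [← b3, div_mul_eq_mul_div, le_div_iff₀ hlt]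
    set L := ∑ i ∈ Tᶜ, |(sStar - s) i|
    set A := ∑ i ∈ T, |(sStar - s) i|
    have hLA : L ≤ A + 2 * l1 (s - sk) := by linarith
    have hAL : A ≤ L := by
      refine le_of_mul_le_mul_left (h1.trans ?_) (by linarith : 0 < 1 - δ)
      nlinarith
    nlinarith
  refine ⟨main, fun hs => ?_⟩
  have h0 : l1 (s - sk) ≤ 0 := (hbest s hs).trans (by simp [l1])
  have h3 : l1 (sStar - s) ≤ 0 := main.trans
    (mul_nonpos_of_nonneg_of_nonpos (div_pos (by linarith) hlt).le h0)
  funext i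
  have := Finset.single_le_sum (f := fun i => |(sStar - s) i|) (fun _ _ => abs_nonneg _)
    (Finset.mem_univ i)
  have h4 : |(sStar - s) i| ≤ 0 := this.trans h3
  have h5 := abs_nonpos_iff.mp h4
  simpa [sub_eq_zero] using h5
end
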